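/- arXiv:1801.04466 — 2 statements merged into one kernel-verified Lean document; each statement's English description precedes it below -/
import Mathlib

section
/- Let n ≥ k ≥ 1, let Φ be an n×k real matrix with orthonormal columns (Φᵀ Φ = I_k), and let V be an invertible k×k real matrix. For each k-element subset S of {1,…,n}, let r_S² = inf{ ‖Φ_S V u‖² : u ∈ ℤ^k, u ≠ 0 } and let r_V² = inf{ ‖V u‖² : u ∈ ℤ^k, u ≠ 0 }. Then there exists a k-element subset S of {1,…,n} with r_S² ≤ (k/n) · r_V². -/
open Matrix

/-- The `k × k` submatrix of `Φ` formed by the rows indexed by the `k`-element subset `S`. -/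
def rowsSub {n k : ℕ} (Φ : Matrix (Fin n) (Fin k) ℝ)
    (S : {s : Finset (Fin n) // s.card = k}) : Matrix (Fin k) (Fin k) ℝ :=
  fun i j => Φ ((S.1.orderIsoOfFin S.2 i : Fin n)) j

/-- Squared Euclidean norm of a vector in `ℝ^k`. -/
def sqnorm {k : ℕ} (x : Fin k → ℝ) : ℝ := ∑ i, x i ^ 2

/-- The squared length of the shortest nonzero vector of the lattice `M ℤ^k`. -/
noncomputable def minSq {k : ℕ} (M : Matrix (Fin k) (Fin k) ℝ) : ℝ :=
  sInf {t : ℝ | ∃ u : Fin k → ℤ, u ≠ 0 ∧ t = sqnorm (M.mulVec fun j => (u j : ℝ))}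

theorem avg_aux (n k : ℕ) (hk : 1 ≤ k) (hkn : k ≤ n) (w : Fin n → ℝ) :
    ∃ S : {s : Finset (Fin n) // s.card = k},
      (n : ℝ) * ∑ i ∈ S.1, w i ≤ k * ∑ i, w i := by
  haveI : NeZero n := ⟨by omega⟩
  obtain ⟨A, -, hA⟩ := Finset.exists_subset_card_eq
    (s := (Finset.univ : Finset (Fin n))) (n := k) (by simpa using hkn)
  have hsum : ∑ t : Fin n, (n : ℝ) * ∑ i ∈ A, w (i + t) ≤ ∑ t : Fin n, k * ∑ i, w i := by
    rw [← Finset.mul_sum, Finset.sum_comm]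
    have h : ∀ i ∈ A, ∑ t, w (i + t) = ∑ t, w t := fun i _ =>
      Equiv.sum_comp (Equiv.addLeft i) w
    rw [Finset.sum_congr rfl h]
    simp [hA]
  obtain ⟨t, -, ht⟩ := Finset.exists_le_of_sum_le ⟨0, Finset.mem_univ _⟩ hsum
  refine ⟨⟨A.map (Equiv.addRight t).toEmbedding, by simpa using hA⟩, ?_⟩
  simpa using ht

theorem sqnorm_rowsSub {n k : ℕ} (Φ : Matrix (Fin n) (Fin k) ℝ)
    (S : {s : Finset (Fin n) // s.card = k}) (x : Fin k → ℝ) :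
    sqnorm ((rowsSub Φ S).mulVec x) = ∑ i ∈ S.1, (Φ.mulVec x i) ^ 2 := by
  rw [← Finset.sum_coe_sort S.1]
  exact Equiv.sum_comp (S.1.orderIsoOfFin S.2).toEquiv
    (fun i : S.1 => (Φ.mulVec x i) ^ 2)

theorem sqnorm_iso {n k : ℕ} (Φ : Matrix (Fin n) (Fin k) ℝ) (hΦ : Φᵀ * Φ = 1)
    (x : Fin k → ℝ) : ∑ i, (Φ.mulVec x i) ^ 2 = sqnorm x := by
  have h : (Φ *ᵥ x) ⬝ᵥ (Φ *ᵥ x) = x ⬝ᵥ x := by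
    rw [Matrix.dotProduct_mulVec, ← Matrix.mulVec_transpose, Matrix.mulVec_mulVec, hΦ,
      Matrix.one_mulVec]
  simpa [dotProduct, sqnorm, pow_two] using h

/-- Minimum form of the trace bound: some `k`-subset `S` has a child lattice
`Φ_S V ℤ^k` whose squared shortest vector is at most `(k/n)` times the squared
shortest vector of the mother lattice `V ℤ^k`. -/
theorem exists_minSq_le_trace_bound (n k : ℕ) (hk : 1 ≤ k) (hkn : k ≤ n)
    (Φ : Matrix (Fin n) (Fin k) ℝ) (hΦ : Φᵀ * Φ = 1)
    (V : Matrix (Fin k) (Fin k) ℝ) (hV : IsUnit V.det) :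
    ∃ S : {s : Finset (Fin n) // s.card = k},
      minSq (rowsSub Φ S * V) ≤ ((k : ℝ) / (n : ℝ)) * minSq V := by
  have hk0 : (0 : ℝ) < k := by exact_mod_cast hk
  have hn0 : (0 : ℝ) < n := by exact_mod_cast (by omega : 0 < n)
  haveI : Nonempty {s : Finset (Fin n) // s.card = k} := ⟨(avg_aux n k hk hkn 0).choose⟩
  obtain ⟨S, hS⟩ := Finite.exists_min
    (fun S : {s : Finset (Fin n) // s.card = k} => minSq (rowsSub Φ S * V))
  refine ⟨S, ?_⟩
  have key : (n : ℝ) / k * minSq (rowsSub Φ S * V) ≤ minSq V := by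
    refine le_csInf ?_ ?_
    · refine ⟨_, fun _ => 1, ?_, rfl⟩
      intro h
      simpa using congrFun h ⟨0, hk⟩
    · rintro t ⟨u, hu, rfl⟩
      obtain ⟨T, hT⟩ := avg_aux n k hk hkn
        (fun i => (Φ.mulVec (V.mulVec fun j => (u j : ℝ)) i) ^ 2)
      rw [← sqnorm_rowsSub, sqnorm_iso Φ hΦ, Matrix.mulVec_mulVec] at hT
      have h1 : minSq (rowsSub Φ T * V) ≤
          sqnorm ((rowsSub Φ T * V).mulVec fun j => (u j : ℝ)) := by
        refine csInf_le ⟨0, ?_⟩ ⟨u, hu, rfl⟩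
        rintro _ ⟨v, -, rfl⟩
        exact Finset.sum_nonneg fun i _ => sq_nonneg _
      have h2 := mul_le_mul_of_nonneg_left ((hS T).trans h1) hn0.le
      rw [div_mul_eq_mul_div, div_le_iff₀ hk0]
      linarith
  rw [div_mul_eq_mul_div, div_le_iff₀ hk0] at key
  rw [div_mul_eq_mul_div, le_div_iff₀ hn0]
  linarith
end

section
/- Let n ≥ k ≥ 1, let Φ be an n×k real matrix with orthonormal columns (Φᵀ Φ = I_k), and let V be an invertible k×k real matrix such that Φ_S V is invertible for every k-element subset S of {1,…,n}. With ρ_S, ρ_V, Δ_S, Δ_V, β_S defined as: ρ_S = (1/2)·inf{ ‖Φ_S V u‖ : u ∈ ℤ^k, u ≠ 0 }, ρ_V = (1/2)·inf{ ‖V u‖ : u ∈ ℤ^k, u ≠ 0 }, Δ_S = V_k ρ_S^k/√(det((Φ_S V)ᵀ Φ_S V)), Δ_V = V_k ρ_V^k/√(det(VᵀV)), β_S = (ρ_S/ρ_V)^k, where V_k is the Lebesgue volume of the unit Euclidean ball in ℝ^k, let β_min = min_S β_S and Δ^# = (∏_S Δ_S)^{1/C(n,k)}. Then (β_min · Δ_V)²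 ≤ (Δ^#)² / C(n,k). -/
open Matrix

/-- Packing radius of the lattice `M ℤ^k`: half the length of its shortest
nonzero vector. -/
noncomputable def packRad {k : ℕ} (M : Matrix (Fin k) (Fin k) ℝ) : ℝ :=
  (1 / 2) * sInf {t : ℝ | ∃ u : Fin k → ℤ, u ≠ 0 ∧
    t = Real.sqrt (sqnorm (M.mulVec fun j => (u j : ℝ)))}

/-- Lebesgue volume of the unit Euclidean ball in `ℝ^k`. -/
noncomputable def unitBallVol (k : ℕ) : ℝ :=
  (MeasureTheory.volume (Metric.ball (0 : EuclideanSpace ℝ (Fin k)) 1)).toReal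

/-- Packing density of the lattice `M ℤ^k`: `V_k ρ^k / √(det (Mᵀ M))`. -/
noncomputable def packDensity {k : ℕ} (M : Matrix (Fin k) (Fin k) ℝ) : ℝ :=
  unitBallVol k * packRad M ^ k / Real.sqrt ((Mᵀ * M).det)

/-- Cauchy–Binet for the Gram determinant. -/
theorem gram_det_eq_sum {n k : ℕ} (Φ : Matrix (Fin n) (Fin k) ℝ) :
    (Φᵀ * Φ).det = ∑ S : {s : Finset (Fin n) // s.card = k}, (rowsSub Φ S).det ^ 2 := by
  have h1 : (Φᵀ * Φ).det
      = ∑ f : Fin k → Fin n, (∏ i, Φ (f i) i) * (Φ.submatrix f id).det := by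
    have e : (Φᵀ * Φ) = fun i => ∑ r, Φ r i • Φ r := by
      funext i j
      simp [Matrix.mul_apply]
    have := (Matrix.detRowAlternating (R := ℝ) (n := Fin k)).toMultilinearMap.map_sum
      (fun (i : Fin k) (r : Fin n) => Φ r i • Φ r)
    rw [e]
    refine this.trans (Finset.sum_congr rfl fun f _ => ?_)
    rw [MultilinearMap.map_smul_univ]
    rfl
  rw [h1]
  have h2 : ∀ S : {s : Finset (Fin n) // s.card = k}, (rowsSub Φ S).det ^ 2
      = ∑ σ : Equiv.Perm (Fin k),
        (∏ i, Φ (S.1.orderIsoOfFin S.2 (σ i) : Fin n) i) *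
          (Φ.submatrix (fun i => (S.1.orderIsoOfFin S.2 (σ i) : Fin n)) id).det := by
    intro S
    have h3 : ∀ σ : Equiv.Perm (Fin k),
        (Φ.submatrix (fun i => (S.1.orderIsoOfFin S.2 (σ i) : Fin n)) id).det
          = (Equiv.Perm.sign σ : ℤ) * (rowsSub Φ S).det := by
      intro σ
      rw [← Matrix.det_permute]
      rfl
    simp_rw [h3]
    rw [pow_two]
    nth_rewrite 1 [Matrix.det_apply']
    rw [Finset.sum_mul]
    refine Finset.sum_congr rfl fun σ _ => ?_
    simp only [rowsSub]
    ring
  simp_rw [h2]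
  rw [← Fintype.sum_sigma' (α := fun _ => Equiv.Perm (Fin k))
    (fun (S : {s : Finset (Fin n) // s.card = k}) (σ : Equiv.Perm (Fin k)) =>
      (∏ i, Φ (S.1.orderIsoOfFin S.2 (σ i) : Fin n) i) *
          (Φ.submatrix (fun i => (S.1.orderIsoOfFin S.2 (σ i) : Fin n)) id).det)]
  symm
  refine Fintype.sum_of_injective
    (fun (p : (_ : {s : Finset (Fin n) // s.card = k}) × Equiv.Perm (Fin k)) (i : Fin k) =>
      (p.1.1.orderIsoOfFin p.1.2 (p.2 i) : Fin n)) ?_ _ _ ?_ ?_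
  · rintro ⟨S, σ⟩ ⟨T, τ⟩ h
    have hh : ∀ i, (S.1.orderIsoOfFin S.2 (σ i) : Fin n) = T.1.orderIsoOfFin T.2 (τ i) :=
      fun i => congrFun h i
    have hST : S = T := by
      apply Subtype.ext
      ext x
      constructor
      · intro hx
        have := hh (σ.symm ((S.1.orderIsoOfFin S.2).symm ⟨x, hx⟩))
        simp only [Equiv.apply_symm_apply, OrderIso.apply_symm_apply] at this
        rw [this]
        exact Subtype.prop _
      · intro hx
        have := hh (τ.symm ((T.1.orderIsoOfFin T.2).symm ⟨x, hx⟩))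
        simp only [Equiv.apply_symm_apply, OrderIso.apply_symm_apply] at this
        rw [← this]
        exact Subtype.prop _
    subst hST
    have : σ = τ := by
      ext i
      have := (S.1.orderIsoOfFin S.2).injective (Subtype.ext (hh i))
      rw [this]
    rw [this]
  · intro f hf
    have : ¬ Function.Injective f := by
      intro hinj
      apply hf
      have hc : (Finset.univ.image f).card = k := by
        rw [Finset.card_image_of_injective _ hinj]; simp
      let e := (Finset.univ.image f).orderIsoOfFin hc
      let g : Fin k → Fin k := fun i => e.symm ⟨f i, by simp⟩
      have hg : Function.Injective g := by
        intro a b hab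
        have := e.symm.injective hab
        exact hinj (congrArg Subtype.val this)
      refine ⟨⟨⟨_, hc⟩, Equiv.ofBijective g (Finite.injective_iff_bijective.mp hg)⟩, ?_⟩
      funext i
      change ((e (g i) : _) : Fin n) = f i
      simp [g]
    simp only [Function.Injective] at this
    push Not at this
    obtain ⟨a, b, hab, hne⟩ := this
    rw [Matrix.det_zero_of_row_eq hne, mul_zero]
    funext j
    simp [hab]
  · rintro ⟨S, σ⟩
    rfl

theorem packRad_nonneg {k : ℕ} (M : Matrix (Fin k) (Fin k) ℝ) : 0 ≤ packRad M := by
  unfold packRad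
  refine mul_nonneg (by norm_num) (Real.sInf_nonneg ?_)
  rintro t ⟨u, _, rfl⟩
  exact Real.sqrt_nonneg _

theorem unitBallVol_nonneg (k : ℕ) : 0 ≤ unitBallVol k := ENNReal.toReal_nonneg

theorem packDensity_eq {k : ℕ} (M : Matrix (Fin k) (Fin k) ℝ) :
    packDensity M = unitBallVol k * packRad M ^ k / |M.det| := by
  unfold packDensity
  rw [Matrix.det_mul, Matrix.det_transpose, Real.sqrt_mul_self_eq_abs]

theorem packDensity_nonneg {k : ℕ} (M : Matrix (Fin k) (Fin k) ℝ) : 0 ≤ packDensity M := by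
  rw [packDensity_eq]
  exact div_nonneg (mul_nonneg (unitBallVol_nonneg k) (pow_nonneg (packRad_nonneg M) k))
    (abs_nonneg _)

/-- Corollary to the Determinant Bound: with `β_min` the minimum contraction ratio
`β_S = (ρ_S/ρ_V)^k` over all `k`-subsets `S` and `Δ^#` the geometric mean of the
packing densities of the child lattices, `(β_min Δ_V)² ≤ (Δ^#)² / C(n,k)`. -/
theorem determinant_bound_min (n k : ℕ) (hk : 1 ≤ k) (hkn : k ≤ n)
    (Φ : Matrix (Fin n) (Fin k) ℝ) (hΦ : Φᵀ * Φ = 1)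
    (V : Matrix (Fin k) (Fin k) ℝ) (hV : IsUnit V.det)
    (hSV : ∀ S : {s : Finset (Fin n) // s.card = k}, IsUnit (rowsSub Φ S * V).det) :
    (sInf {b : ℝ | ∃ S : {s : Finset (Fin n) // s.card = k},
          b = (packRad (rowsSub Φ S * V) / packRad V) ^ k}
        * packDensity V) ^ 2
      ≤ ((∏ S : {s : Finset (Fin n) // s.card = k},
          packDensity (rowsSub Φ S * V)) ^ ((1 : ℝ) / (n.choose k : ℝ))) ^ 2
        / (n.choose k : ℝ) := by
  set N : ℕ := n.choose k with hN
  have hNpos : 0 < N := Nat.choose_pos hkn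
  have hNR : (0 : ℝ) < N := by exact_mod_cast hNpos
  have hcard : Fintype.card {s : Finset (Fin n) // s.card = k} = N := by
    simp [hN]
  have hcb : ∑ S : {s : Finset (Fin n) // s.card = k}, (rowsSub Φ S).det ^ 2 = 1 := by
    rw [← gram_det_eq_sum, hΦ, Matrix.det_one]
  set B : Set ℝ := {b : ℝ | ∃ S : {s : Finset (Fin n) // s.card = k},
          b = (packRad (rowsSub Φ S * V) / packRad V) ^ k} with hB
  have hBnn : ∀ b ∈ B, 0 ≤ b := by
    rintro b ⟨S, rfl⟩
    exact pow_nonneg (div_nonneg (packRad_nonneg _) (packRad_nonneg _)) _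
  set m : ℝ := sInf B * packDensity V with hm
  have hm0 : 0 ≤ m := mul_nonneg (Real.sInf_nonneg hBnn) (packDensity_nonneg V)
  have hVd : |V.det| ≠ 0 := abs_ne_zero.mpr hV.ne_zero
  have key : ∀ S : {s : Finset (Fin n) // s.card = k},
      m ≤ packDensity (rowsSub Φ S * V) * |(rowsSub Φ S).det| := by
    intro S
    have hS : (rowsSub Φ S).det ≠ 0 := by
      have := (hSV S).ne_zero
      rw [Matrix.det_mul] at this
      exact left_ne_zero_of_mul this
    have hSa : |(rowsSub Φ S).det| ≠ 0 := abs_ne_zero.mpr hS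
    have h1 : m ≤ (packRad (rowsSub Φ S * V) / packRad V) ^ k * packDensity V :=
      mul_le_mul_of_nonneg_right (csInf_le ⟨0, hBnn⟩ ⟨S, rfl⟩) (packDensity_nonneg V)
    refine h1.trans ?_
    have h2 : packDensity (rowsSub Φ S * V) * |(rowsSub Φ S).det|
        = unitBallVol k * packRad (rowsSub Φ S * V) ^ k / |V.det| := by
      rw [packDensity_eq, Matrix.det_mul, abs_mul]
      field_simp
    rw [h2, packDensity_eq V]
    by_cases hz : packRad V = 0
    · rw [hz, zero_pow (by omega)]
      simp only [mul_zero, zero_div]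
      exact div_nonneg (mul_nonneg (unitBallVol_nonneg k) (pow_nonneg (packRad_nonneg _) k))
        (abs_nonneg _)
    · rw [div_pow]
      apply le_of_eq
      field_simp
  have hP0 : 0 ≤ ∏ S : {s : Finset (Fin n) // s.card = k}, packDensity (rowsSub Φ S * V) :=
    Finset.prod_nonneg fun S _ => packDensity_nonneg _
  set P := ∏ S : {s : Finset (Fin n) // s.card = k}, packDensity (rowsSub Φ S * V) with hP
  set Q := ∏ S : {s : Finset (Fin n) // s.card = k}, (rowsSub Φ S).det ^ 2 with hQ
  have hQ0 : 0 ≤ Q := Finset.prod_nonneg fun S _ => sq_nonneg _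
  have hprod : (m ^ 2) ^ N ≤ P ^ 2 * Q := by
    have : ∏ _S : {s : Finset (Fin n) // s.card = k}, m ^ 2
        ≤ ∏ S : {s : Finset (Fin n) // s.card = k},
          (packDensity (rowsSub Φ S * V) ^ 2 * (rowsSub Φ S).det ^ 2) := by
      refine Finset.prod_le_prod (fun _ _ => sq_nonneg _) fun S _ => ?_
      rw [← sq_abs (rowsSub Φ S).det, ← mul_pow]
      exact pow_le_pow_left₀ hm0 (key S) 2
    rw [Finset.prod_mul_distrib, Finset.prod_const, Finset.card_univ, hcard,
      Finset.prod_pow _ 2 (fun S => packDensity (rowsSub Φ S * V))] at this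
    exact this
  have hamgm : Q ^ ((1 : ℝ) / N) ≤ 1 / N := by
    have h := Real.geom_mean_le_arith_mean_weighted Finset.univ
      (fun _ : {s : Finset (Fin n) // s.card = k} => (1 : ℝ) / N)
      (fun S => (rowsSub Φ S).det ^ 2) (fun _ _ => by positivity)
      (by rw [Finset.sum_const, Finset.card_univ, hcard, nsmul_eq_mul]; field_simp)
      (fun _ _ => sq_nonneg _)
    rw [← Finset.mul_sum, hcb, mul_one, Real.finsetProd_rpow _ _ (fun _ _ => sq_nonneg _)] at h
    exact h
  have h5 : m ^ 2 ≤ (P ^ 2 * Q) ^ ((1 : ℝ) / N) := by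
    have := Real.rpow_le_rpow (by positivity) hprod (z := (1 : ℝ) / N) (by positivity)
    rwa [one_div, Real.pow_rpow_inv_natCast (by positivity) hNpos.ne', ← one_div] at this
  rw [Real.mul_rpow (by positivity) hQ0] at h5
  have h6 : (P ^ 2) ^ ((1 : ℝ) / N) = (P ^ ((1 : ℝ) / N)) ^ 2 := by
    rw [← Real.rpow_natCast, ← Real.rpow_natCast, ← Real.rpow_mul hP0, ← Real.rpow_mul hP0,
      mul_comm]
  rw [h6] at h5
  refine h5.trans ?_
  rw [div_eq_mul_one_div (_ ^ 2) (N : ℝ)]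
  exact mul_le_mul_of_nonneg_left hamgm (sq_nonneg _)
end
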